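/- arXiv:2203.08767 — 2 statements merged into one kernel-verified Lean document; each statement's English description precedes it below -/
import Mathlib

section
/- Fix 0 < R < Q and suppose (Q − R)/2 < s < (Q + R)/2. Let A_{R,Q} = {p ∈ ℝ² : R ≤ ‖p‖ ≤ Q} and define γ : [0,Q] → ℝ by γ(c) = vol(A_{R,Q} ∩ B(p_c,s)). Let c* = √((R² + Q²)/2 − s²) (a well-defined positive real number under the hypotheses). Then γ attains its maximum over [0,Q] at c*: γ(c*) ≥ γ(c) for all c ∈ [0,Q]. -/
open Set MeasureTheory Metric

/-- The point `(c, 0)` in the Euclidean plane. -/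
noncomputable def pc (c : ℝ) : EuclideanSpace ℝ (Fin 2) :=
  (WithLp.equiv 2 (Fin 2 → ℝ)).symm ![c, 0]

lemma aux_diff (T : Set ℝ) (hT : MeasurableSet T) (w a b : ℝ) (hw : 0 ≤ w) :
    (volume (T ∩ Ioo (b - w) (b + w))).toReal - (volume (T ∩ Ioo (a - w) (a + w))).toReal
      = ∫ t in a..b, (T.indicator (fun _ => (1:ℝ)) (t + w) - T.indicator (fun _ => (1:ℝ)) (t - w)) := by
  set g : ℝ → ℝ := T.indicator (fun _ => (1:ℝ)) with hg
  have hli : LocallyIntegrable g volume :=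
    (locallyIntegrable_const (1:ℝ)).indicator hT
  have hi : ∀ x y, IntervalIntegrable g volume x y := fun x y =>
    (hli.integrableOn_isCompact isCompact_uIcc).intervalIntegrable
  have key : ∀ c, (volume (T ∩ Ioo (c - w) (c + w))).toReal = ∫ x in (c - w)..(c + w), g x := by
    intro c
    rw [intervalIntegral.integral_of_le (by linarith), integral_Ioc_eq_integral_Ioo, hg,
      integral_indicator_const _ hT]
    simp [Measure.real, Measure.restrict_apply hT]
  rw [key, key, intervalIntegral.integral_sub, intervalIntegral.integral_comp_add_right,
    intervalIntegral.integral_comp_sub_right]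
  · have h1 := intervalIntegral.integral_add_adjacent_intervals (hi (a - w) (a + w)) (hi (a + w) (b + w))
    have h2 := intervalIntegral.integral_add_adjacent_intervals (hi (a - w) (b - w)) (hi (b - w) (b + w))
    linarith
  · simpa using (hi (a + w) (b + w)).comp_add_right w
  · simpa using (hi (a - w) (b - w)).comp_sub_right w

lemma aux_fin (T : Set ℝ) (a b : ℝ) : volume (T ∩ Ioo a b) ≠ ⊤ :=
  ((measure_mono inter_subset_right).trans_lt (by simp)).ne

lemma aux_mono (T : Set ℝ) (hT : MeasurableSet T) (w a b : ℝ) (hw : 0 ≤ w) (hab : a ≤ b)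
    (h : ∀ t ∈ Icc a b, t - w ∈ T → t + w ∈ T) :
    volume (T ∩ Ioo (a - w) (a + w)) ≤ volume (T ∩ Ioo (b - w) (b + w)) := by
  rw [← ENNReal.toReal_le_toReal (aux_fin _ _ _) (aux_fin _ _ _), ← sub_nonneg,
    aux_diff T hT w a b hw]
  refine intervalIntegral.integral_nonneg hab fun t ht => ?_
  have := h t ht
  by_cases h1 : t - w ∈ T
  · simp [h1, this h1]
  · simp only [indicator_of_notMem h1, sub_zero]
    exact indicator_nonneg (by simp) _

lemma aux_anti (T : Set ℝ) (hT : MeasurableSet T) (w a b : ℝ) (hw : 0 ≤ w) (hab : a ≤ b)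
    (h : ∀ t ∈ Icc a b, t + w ∈ T → t - w ∈ T) :
    volume (T ∩ Ioo (b - w) (b + w)) ≤ volume (T ∩ Ioo (a - w) (a + w)) := by
  rw [← ENNReal.toReal_le_toReal (aux_fin _ _ _) (aux_fin _ _ _), ← sub_nonpos,
    aux_diff T hT w a b hw]
  rw [← neg_nonneg, ← intervalIntegral.integral_neg]
  refine intervalIntegral.integral_nonneg hab fun t ht => ?_
  have := h t ht
  by_cases h1 : t + w ∈ T
  · simp [h1, this h1]
  · simp only [indicator_of_notMem h1, zero_sub, neg_neg]
    exact indicator_nonneg (by simp) _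

lemma aux_slice (R Q s y c d : ℝ) (hc : 0 ≤ c) (hd : 0 ≤ d)
    (hd2 : d ^ 2 = (R ^ 2 + Q ^ 2) / 2 - s ^ 2) :
    volume {x : ℝ | (R ^ 2 ≤ x ^ 2 + y ^ 2 ∧ x ^ 2 + y ^ 2 ≤ Q ^ 2) ∧ (x - c) ^ 2 + y ^ 2 < s ^ 2} ≤
    volume {x : ℝ | (R ^ 2 ≤ x ^ 2 + y ^ 2 ∧ x ^ 2 + y ^ 2 ≤ Q ^ 2) ∧ (x - d) ^ 2 + y ^ 2 < s ^ 2} := by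
  rcases lt_or_ge (s ^ 2 - y ^ 2) 0 with hy | hy
  · have : {x : ℝ | (R ^ 2 ≤ x ^ 2 + y ^ 2 ∧ x ^ 2 + y ^ 2 ≤ Q ^ 2) ∧ (x - c) ^ 2 + y ^ 2 < s ^ 2} = ∅ := by
      ext x
      simp only [mem_ofPred_eq, mem_empty_iff_false, iff_false]
      rintro ⟨_, h⟩
      nlinarith [sq_nonneg (x - c)]
    rw [this]; simp
  obtain ⟨w, hw, hw2⟩ : ∃ w : ℝ, 0 ≤ w ∧ w ^ 2 = s ^ 2 - y ^ 2 :=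
    ⟨_, Real.sqrt_nonneg _, Real.sq_sqrt hy⟩
  set T : Set ℝ := {x : ℝ | R ^ 2 ≤ x ^ 2 + y ^ 2 ∧ x ^ 2 + y ^ 2 ≤ Q ^ 2} with hT
  have hTm : MeasurableSet T := by
    have h1 : IsClosed {x : ℝ | R ^ 2 ≤ x ^ 2 + y ^ 2} :=
      isClosed_le (by fun_prop) (by fun_prop)
    have h2 : IsClosed {x : ℝ | x ^ 2 + y ^ 2 ≤ Q ^ 2} :=
      isClosed_le (by fun_prop) (by fun_prop)
    exact h1.measurableSet.inter h2.measurableSet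
  have key : ∀ e, {x : ℝ | (R ^ 2 ≤ x ^ 2 + y ^ 2 ∧ x ^ 2 + y ^ 2 ≤ Q ^ 2) ∧ (x - e) ^ 2 + y ^ 2 < s ^ 2}
      = T ∩ Ioo (e - w) (e + w) := by
    intro e
    ext x
    have : (x - e) ^ 2 + y ^ 2 < s ^ 2 ↔ x ∈ Ioo (e - w) (e + w) := by
      rw [show (x - e) ^ 2 + y ^ 2 < s ^ 2 ↔ (x - e) ^ 2 < w ^ 2 by rw [hw2]; constructor <;> intro <;> linarith,
        sq_lt_sq, abs_of_nonneg hw, abs_lt, mem_Ioo]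
      constructor <;> rintro ⟨h1, h2⟩ <;> constructor <;> linarith
    simp only [mem_ofPred_eq, mem_inter_iff, this, hT]
  rw [key, key]
  rcases le_total c d with h | h
  · refine aux_mono T hTm w c d hw h ?_
    rintro t ⟨h1, h2⟩ ⟨h3, h4⟩
    have h5 : t ^ 2 ≤ d ^ 2 := by gcongr; linarith
    have h6 : 0 ≤ t * w := mul_nonneg (by linarith) hw
    constructor <;> nlinarith
  · refine aux_anti T hTm w d c hw h ?_
    rintro t ⟨h1, h2⟩ ⟨h3, h4⟩
    have h5 : d ^ 2 ≤ t ^ 2 := by gcongr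
    have h6 : 0 ≤ t * w := mul_nonneg (by linarith) hw
    constructor <;> nlinarith

lemma aux_vol (R Q s c : ℝ) (hR : 0 < R) (hQ : 0 < Q) (hs : 0 < s) :
    volume ({p : EuclideanSpace ℝ (Fin 2) | R ≤ ‖p‖ ∧ ‖p‖ ≤ Q} ∩ ball (pc c) s) =
    ∫⁻ y : ℝ, volume {x : ℝ | (R ^ 2 ≤ x ^ 2 + y ^ 2 ∧ x ^ 2 + y ^ 2 ≤ Q ^ 2) ∧
      (x - c) ^ 2 + y ^ 2 < s ^ 2} := by
  set S : Set (ℝ × ℝ) := {z | (R ^ 2 ≤ z.1 ^ 2 + z.2 ^ 2 ∧ z.1 ^ 2 + z.2 ^ 2 ≤ Q ^ 2) ∧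
      (z.1 - c) ^ 2 + z.2 ^ 2 < s ^ 2} with hS
  have hSm : MeasurableSet S := by
    have h1 : IsClosed {z : ℝ × ℝ | R ^ 2 ≤ z.1 ^ 2 + z.2 ^ 2} :=
      isClosed_le (by fun_prop) (by fun_prop)
    have h2 : IsClosed {z : ℝ × ℝ | z.1 ^ 2 + z.2 ^ 2 ≤ Q ^ 2} :=
      isClosed_le (by fun_prop) (by fun_prop)
    have h3 : IsOpen {z : ℝ × ℝ | (z.1 - c) ^ 2 + z.2 ^ 2 < s ^ 2} :=
      isOpen_lt (by fun_prop) (by fun_prop)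
    exact (h1.measurableSet.inter h2.measurableSet).inter h3.measurableSet
  have hmp := (volume_preserving_finTwoArrow ℝ).comp
    (PiLp.volume_preserving_ofLp (Fin 2))
  have : ({p : EuclideanSpace ℝ (Fin 2) | R ≤ ‖p‖ ∧ ‖p‖ ≤ Q} ∩ ball (pc c) s) =
      (fun p : EuclideanSpace ℝ (Fin 2) => (p 0, p 1)) ⁻¹' S := by
    ext p
    simp only [mem_inter_iff, mem_ofPred_eq, mem_ball, mem_preimage, hS, EuclideanSpace.norm_eq,
      EuclideanSpace.dist_eq, Fin.sum_univ_two, Real.norm_eq_abs, Real.dist_eq, sq_abs, pc]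
    rw [Real.le_sqrt hR.le, Real.sqrt_le_left hQ.le, Real.sqrt_lt' hs]
    · simp
    · positivity
  rw [this]
  have h2 := hmp.measure_preimage hSm.nullMeasurableSet
  rw [Measure.volume_eq_prod, Measure.prod_apply_symm hSm] at h2
  exact h2

/-- For `(Q-R)/2 < s < (Q+R)/2`, the area
`γ(c) = vol(A_{R,Q} ∩ B((c,0),s))` attains its maximum over `[0,Q]` at
`c* = √((R² + Q²)/2 - s²)`, which is a well-defined positive real number. -/
theorem gamma_max_at_cstar
    (R Q s : ℝ) (hR : 0 < R) (hRQ : R < Q)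
    (hs1 : (Q - R) / 2 < s) (hs2 : s < (Q + R) / 2)
    (γ : ℝ → ℝ)
    (hγ : ∀ c, γ c =
      (volume ({p : EuclideanSpace ℝ (Fin 2) | R ≤ ‖p‖ ∧ ‖p‖ ≤ Q} ∩ ball (pc c) s)).toReal)
    (cstar : ℝ) (hcstar : cstar = Real.sqrt ((R ^ 2 + Q ^ 2) / 2 - s ^ 2)) :
    0 < cstar ∧ ∀ c ∈ Icc (0:ℝ) Q, γ c ≤ γ cstar := by
  have hs : 0 < s := by linarith
  have hpos : 0 < (R ^ 2 + Q ^ 2) / 2 - s ^ 2 := by nlinarith [sq_nonneg (Q - R)]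
  have hc0 : 0 < cstar := by rw [hcstar]; exact Real.sqrt_pos.2 hpos
  refine ⟨hc0, fun c hc => ?_⟩
  rw [hγ, hγ]
  refine ENNReal.toReal_mono ?_ ?_
  · exact ((measure_mono inter_subset_right).trans_lt measure_ball_lt_top).ne
  · rw [aux_vol R Q s c hR (by linarith) hs, aux_vol R Q s cstar hR (by linarith) hs]
    refine lintegral_mono fun y => aux_slice R Q s y c cstar hc.1 hc0.le ?_
    rw [hcstar, Real.sq_sqrt hpos.le]
end

section
/- Fix 0 < R < Q and 0 < w < 1, set a = w/(πR²) and b = (1−w)/(π(Q²−R²)), assume a < b, and let μ be the measure on the Euclidean plane with density f with respect to 2-dimensional Lebesgue measure, where f(p) = a if ‖p‖ < R, f(p) = b if R ≤ ‖p‖ ≤ Q, and f(p) = 0 if ‖p‖ > Q. Then for every s > 0 and every k with 0 < k ≤ 1, there exists a closed interval I ⊆ [0,Q] (possibly empty) such that {p ∈ ℝ² : ‖p‖ ≤ Q and μ(B(p,s)) ≥ k} = {p ∈ ℝ² : ‖p‖ ∈ I}. In particular, this superlevel set is either empty or a closed annulus (possibly degenerate) centered at the origin. -/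
open Set MeasureTheory Metric

noncomputable section

/-- Squared half chord (can be negative). -/
def chordE (ρ s τ : ℝ) : ℝ := s ^ 2 - ((τ ^ 2 + s ^ 2 - ρ ^ 2) / (2 * τ)) ^ 2

def phiInd (ρ x y : ℝ) : ℝ := if x ^ 2 + y ^ 2 < ρ ^ 2 then 1 else 0

def lensSet (ρ s t : ℝ) : Set (ℝ × ℝ) :=
  {z | (z.1 - t) ^ 2 + z.2 ^ 2 < s ^ 2 ∧ z.1 ^ 2 + z.2 ^ 2 < ρ ^ 2}

def sliceI (ρ s t y : ℝ) : ℝ :=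
  ∫ x in (t - √(s ^ 2 - y ^ 2))..(t + √(s ^ 2 - y ^ 2)), phiInd ρ x y

set_option maxHeartbeats 1000000 in
lemma chord_sign {R Q s b c τ₁ τ₂ : ℝ} (hR : 0 < R) (hRQ : R < Q) (hs : 0 < s) (hc : 0 < c)
    (hcb : c < b) (h1 : 0 < τ₁) (h12 : τ₁ < τ₂) (h2 : τ₂ ≤ Q)
    (hneg : c * √(chordE R s τ₁) < b * √(chordE Q s τ₁)) :
    c * √(chordE R s τ₂) ≤ b * √(chordE Q s τ₂) := by
  by_contra! hcon
  have hb : 0 < b := hc.trans hcb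
  have sqmul : ∀ x y : ℝ, 0 ≤ x → x * √y = √(x ^ 2 * y) := fun x y hx => by
    rw [Real.sqrt_mul (sq_nonneg x), Real.sqrt_sq hx]
  rw [sqmul _ _ hc.le, sqmul _ _ hb.le] at hneg hcon
  have p1 := lt_of_not_ge fun hle => hneg.not_ge (Real.sqrt_le_sqrt hle)
  have p2 := lt_of_not_ge fun hle => hcon.not_ge (Real.sqrt_le_sqrt hle)
  have q1 : 0 < b ^ 2 * chordE Q s τ₁ := Real.sqrt_pos.1 ((Real.sqrt_nonneg _).trans_lt hneg)
  have hF : ∀ ρ τ : ℝ, 0 < τ → chordE ρ s τ * (4 * τ ^ 2) =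
      4 * τ ^ 2 * s ^ 2 - (τ ^ 2 + s ^ 2 - ρ ^ 2) ^ 2 := by
    intro ρ τ hτ
    unfold chordE
    field_simp
    ring
  have h02 : 0 < τ₂ := h1.trans h12
  have hu12 : τ₁ ^ 2 < τ₂ ^ 2 := by nlinarith
  have hu2 : τ₂ ^ 2 ≤ Q ^ 2 := by nlinarith
  have e1R := hF R τ₁ h1
  have e1Q := hF Q τ₁ h1
  have e2R := hF R τ₂ h02
  have e2Q := hF Q τ₂ h02
  have t1 : 0 < 4 * τ₁ ^ 2 := by positivity
  have t2 : 0 < 4 * τ₂ ^ 2 := by positivity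
  have d1 := mul_lt_mul_of_pos_right p1 t1
  have d2 := mul_lt_mul_of_pos_right p2 t2
  have d3 : 0 < chordE Q s τ₁ * (4 * τ₁ ^ 2) := mul_pos (pos_of_mul_pos_right q1 (by positivity)) t1
  rw [mul_assoc, mul_assoc, e1R, e1Q] at d1
  rw [mul_assoc, mul_assoc, e2R, e2Q] at d2
  rw [e1Q] at d3
  set u := τ₁ ^ 2 with hu
  set v := τ₂ ^ 2 with hv
  have hQ : 0 < Q := hR.trans hRQ
  have hs2 : s < 2 * Q := by
    by_contra! hh
    have g1 : 0 < (s + Q) ^ 2 - u := by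
      have : 0 < s * (s + 2 * Q) := by positivity
      linarith [show (s + Q) ^ 2 = s * (s + 2 * Q) + Q ^ 2 by ring]
    have g2 : 0 ≤ (s - Q) ^ 2 - u := by
      have : 0 ≤ s * (s - 2 * Q) := mul_nonneg hs.le (by linarith)
      linarith [show (s - Q) ^ 2 = s * (s - 2 * Q) + Q ^ 2 by ring]
    have g3 := mul_nonneg g1.le g2
    have g4 : ((s + Q) ^ 2 - u) * ((s - Q) ^ 2 - u) =
        -(4 * u * s ^ 2 - (u + s ^ 2 - Q ^ 2) ^ 2) := by ring
    linarith
  set q := Q ^ 2 with hq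
  have hFQ : 0 ≤ 4 * q * s ^ 2 - (q + s ^ 2 - q) ^ 2 := by
    have : 4 * q * s ^ 2 - (q + s ^ 2 - q) ^ 2 = s ^ 2 * ((2 * Q - s) * (2 * Q + s)) := by
      rw [hq]; ring
    rw [this]
    have : 0 < 2 * Q - s := by linarith
    positivity
  have hRq : R ^ 2 < q := by rw [hq]; gcongr
  have hFR : 4 * q * s ^ 2 - (q + s ^ 2 - R ^ 2) ^ 2 ≤ 4 * q * s ^ 2 - (q + s ^ 2 - q) ^ 2 := by
    have h7 := mul_nonneg (sq_nonneg s) (sub_pos.2 hRq).le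
    have h8 := sq_nonneg (q - R ^ 2)
    linarith [show (q + s ^ 2 - R ^ 2) ^ 2 = (q - R ^ 2) ^ 2 + 2 * (s ^ 2 * (q - R ^ 2)) +
      (q + s ^ 2 - q) ^ 2 by ring]
  have hcb2 : 0 < b ^ 2 - c ^ 2 := by
    have : c ^ 2 < b ^ 2 := by gcongr
    linarith
  have hD : c ^ 2 * (4 * q * s ^ 2 - (q + s ^ 2 - R ^ 2) ^ 2)
      - b ^ 2 * (4 * q * s ^ 2 - (q + s ^ 2 - q) ^ 2) ≤ 0 := by
    have := mul_le_mul_of_nonneg_left hFR (sq_nonneg c)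
    have h9 := mul_nonneg hcb2.le hFQ
    rw [sub_mul] at h9
    linarith
  have m1 : 0 < (q - u) * (c ^ 2 * (4 * v * s ^ 2 - (v + s ^ 2 - R ^ 2) ^ 2)
      - b ^ 2 * (4 * v * s ^ 2 - (v + s ^ 2 - q) ^ 2)) := mul_pos (by linarith) (by linarith)
  have m2 : 0 ≤ (q - v) * -(c ^ 2 * (4 * u * s ^ 2 - (u + s ^ 2 - R ^ 2) ^ 2)
      - b ^ 2 * (4 * u * s ^ 2 - (u + s ^ 2 - q) ^ 2)) := mul_nonneg (by linarith) (by linarith)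
  have m3 : 0 ≤ (v - u) * -(c ^ 2 * (4 * q * s ^ 2 - (q + s ^ 2 - R ^ 2) ^ 2)
      - b ^ 2 * (4 * q * s ^ 2 - (q + s ^ 2 - q) ^ 2)) := mul_nonneg (by linarith) (by linarith)
  have m4 : 0 ≤ (b ^ 2 - c ^ 2) * ((v - u) * ((q - v) * (q - u))) :=
    mul_nonneg hcb2.le (mul_nonneg (by linarith) (mul_nonneg (by linarith) (by linarith)))
  linarith

lemma phi_meas (ρ : ℝ) : Measurable (fun z : ℝ × ℝ => phiInd ρ z.1 z.2) := by
  unfold phiInd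
  refine Measurable.ite (measurableSet_lt (by fun_prop) (by fun_prop)) measurable_const
    measurable_const

lemma phi_bound (ρ x y : ℝ) : ‖phiInd ρ x y‖ ≤ 1 := by
  unfold phiInd; split_ifs <;> simp

lemma phi_ii (ρ y a b : ℝ) : IntervalIntegrable (fun x => phiInd ρ x y) volume a b := by
  rw [intervalIntegrable_iff]
  refine Measure.integrableOn_of_bounded (M := 1) (by simp) ?_ (ae_of_all _ fun x => phi_bound _ _ _)
  exact ((phi_meas ρ).comp (by fun_prop : Measurable fun x : ℝ => (x, y))).aestronglyMeasurable

lemma slice_diff (ρ s t₁ t₂ y : ℝ) : sliceI ρ s t₂ y - sliceI ρ s t₁ y =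
    ∫ τ in t₁..t₂, (phiInd ρ (τ + √(s ^ 2 - y ^ 2)) y - phiInd ρ (τ - √(s ^ 2 - y ^ 2)) y) := by
  unfold sliceI
  set σ := √(s ^ 2 - y ^ 2)
  rw [intervalIntegral.integral_sub, intervalIntegral.integral_comp_add_right (fun x => phiInd ρ x y),
    intervalIntegral.integral_comp_sub_right (fun x => phiInd ρ x y)]
  · have := intervalIntegral.integral_add_adjacent_intervals (phi_ii ρ y (t₁ - σ) (t₁ + σ))
      (phi_ii ρ y (t₁ + σ) (t₂ + σ))
    have := intervalIntegral.integral_add_adjacent_intervals (phi_ii ρ y (t₁ - σ) (t₂ - σ))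
      (phi_ii ρ y (t₂ - σ) (t₂ + σ))
    linarith
  · have := (phi_ii ρ y (t₁ + σ) (t₂ + σ)).comp_add_right σ
    simpa using this
  · have := (phi_ii ρ y (t₁ - σ) (t₂ - σ)).comp_sub_right σ
    simpa using this

lemma inner_int {ρ s τ : ℝ} (hs : 0 < s) (hτ : 0 < τ) :
    ∫ y in (-s)..s, (phiInd ρ (τ + √(s ^ 2 - y ^ 2)) y - phiInd ρ (τ - √(s ^ 2 - y ^ 2)) y)
      = - (2 * √(chordE ρ s τ)) := by
  set h := √(chordE ρ s τ) with hh
  have h0 : 0 ≤ h := Real.sqrt_nonneg _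
  have hhs : h ≤ s := by
    rw [hh, Real.sqrt_le_left hs.le]
    unfold chordE
    nlinarith [sq_nonneg ((τ ^ 2 + s ^ 2 - ρ ^ 2) / (2 * τ))]
  have key : ∫ y in (-s)..s, (phiInd ρ (τ + √(s ^ 2 - y ^ 2)) y - phiInd ρ (τ - √(s ^ 2 - y ^ 2)) y)
      = ∫ y in (-s)..s, (Ioc (-h) h).indicator (fun _ => (-1 : ℝ)) y := by
    apply intervalIntegral.integral_congr_ae
    have n1 : ∀ᵐ y : ℝ, y ≠ h := by simp [ae_iff]
    have n2 : ∀ᵐ y : ℝ, y ≠ -h := by simp [ae_iff]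
    filter_upwards [n1, n2] with y hy1 hy2 hy
    rw [uIoc_of_le (by linarith)] at hy
    set x := (τ ^ 2 + s ^ 2 - ρ ^ 2) / (2 * τ) with hx
    have hxe : τ ^ 2 + s ^ 2 - ρ ^ 2 = 2 * τ * x := by rw [hx]; field_simp
    have hy0 : 0 ≤ s ^ 2 - y ^ 2 := by nlinarith [hy.1, hy.2]
    have hσ := Real.sq_sqrt hy0
    have hσ0 := Real.sqrt_nonneg (s ^ 2 - y ^ 2)
    set σ := √(s ^ 2 - y ^ 2)
    have c1 : (τ + σ) ^ 2 + y ^ 2 < ρ ^ 2 ↔ σ < -x := by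
      have : (τ + σ) ^ 2 + y ^ 2 - ρ ^ 2 = 2 * τ * (σ + x) := by linear_combination hσ + hxe
      constructor
      · intro hl
        by_contra! hcc
        have : 0 ≤ 2 * τ * (σ + x) := mul_nonneg (by linarith) (by linarith)
        linarith
      · intro hl
        have : 0 < 2 * τ * (-(σ + x)) := mul_pos (by linarith) (by linarith)
        linarith
    have c2 : (τ - σ) ^ 2 + y ^ 2 < ρ ^ 2 ↔ x < σ := by
      have : (τ - σ) ^ 2 + y ^ 2 - ρ ^ 2 = 2 * τ * (x - σ) := by linear_combination hσ + hxe
      constructor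
      · intro hl
        by_contra! hcc
        have : 0 ≤ 2 * τ * (x - σ) := mul_nonneg (by linarith) (by linarith)
        linarith
      · intro hl
        have : 0 < 2 * τ * (-(x - σ)) := mul_pos (by linarith) (by linarith)
        linarith
    unfold phiInd
    simp only [c1, c2]
    have hE : chordE ρ s τ = s ^ 2 - x ^ 2 := rfl
    by_cases hm : y ∈ Ioc (-h) h
    · rw [indicator_of_mem hm]
      have hyh : y < h := lt_of_le_of_ne hm.2 hy1
      have hpos : 0 < h := by linarith [hm.1]
      have hsq : h ^ 2 = chordE ρ s τ := Real.sq_sqrt (Real.sqrt_pos.1 hpos).le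
      have : y ^ 2 < h ^ 2 := by nlinarith [hm.1]
      have hxs : x ^ 2 < σ ^ 2 := by linarith
      have := abs_lt_of_sq_lt_sq hxs hσ0
      rw [abs_lt] at this
      rw [if_neg (by linarith), if_pos (by linarith)]
      norm_num
    · rw [indicator_of_notMem hm]
      have hle : chordE ρ s τ ≤ h ^ 2 := by
        rcases le_total 0 (chordE ρ s τ) with h3 | h3
        · exact (Real.sq_sqrt h3).ge
        · exact h3.trans (sq_nonneg _)
      have : h ^ 2 < y ^ 2 := by
        rw [mem_Ioc, not_and_or, not_lt, not_le] at hm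
        rcases hm with hm | hm
        · have : y < -h := lt_of_le_of_ne hm hy2
          nlinarith
        · nlinarith
      have hxs : σ ^ 2 < x ^ 2 := by linarith
      rcases le_or_gt 0 x with h5 | h5
      · have : σ < x := lt_of_pow_lt_pow_left₀ 2 h5 hxs
        rw [if_neg (by linarith), if_neg (by linarith)]; norm_num
      · have : σ < -x := lt_of_pow_lt_pow_left₀ 2 (by linarith) (by linarith [neg_sq x])
        rw [if_pos (by linarith), if_pos (by linarith)]; norm_num
  rw [key, intervalIntegral.integral_of_le (by linarith), setIntegral_indicator measurableSet_Ioc,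
    inter_eq_self_of_subset_right (Ioc_subset_Ioc (by linarith) hhs)]
  simp [Measure.real, ENNReal.toReal_ofReal, h0]
  ring

lemma lens_meas (ρ s t : ℝ) : MeasurableSet (lensSet ρ s t) := by
  have h1 : MeasurableSet {z : ℝ × ℝ | (z.1 - t) ^ 2 + z.2 ^ 2 < s ^ 2} :=
    measurableSet_lt (by fun_prop) (by fun_prop)
  have h2 : MeasurableSet {z : ℝ × ℝ | z.1 ^ 2 + z.2 ^ 2 < ρ ^ 2} :=
    measurableSet_lt (by fun_prop) (by fun_prop)
  exact h1.inter h2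

lemma lens_lt_top {ρ s t : ℝ} (hs : 0 < s) : volume (lensSet ρ s t) < ⊤ := by
  have : lensSet ρ s t ⊆ Icc (t - s) (t + s) ×ˢ Icc (-s) s := by
    rintro ⟨x, y⟩ ⟨h1, -⟩
    simp only at h1
    have := abs_le_of_sq_le_sq' (a := x - t) (b := s) (by nlinarith [sq_nonneg y]) hs.le
    have := abs_le_of_sq_le_sq' (a := y) (b := s) (by nlinarith [sq_nonneg (x - t)]) hs.le
    simp only [mem_prod, mem_Icc]
    constructor <;> constructor <;> linarith
  refine (measure_mono this).trans_lt ?_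
  exact (isCompact_Icc.prod isCompact_Icc).measure_lt_top

lemma slice_eq (ρ s t y : ℝ) :
    ∫ x, (lensSet ρ s t).indicator (1 : ℝ × ℝ → ℝ) (x, y) = sliceI ρ s t y := by
  unfold sliceI
  have h0 := Real.sqrt_nonneg (s ^ 2 - y ^ 2)
  rw [intervalIntegral.integral_of_le (by linarith), integral_Ioc_eq_integral_Ioo,
    ← integral_indicator measurableSet_Ioo]
  congr 1
  ext x
  have : (x - t) ^ 2 + y ^ 2 < s ^ 2 ↔ x ∈ Ioo (t - √(s ^ 2 - y ^ 2)) (t + √(s ^ 2 - y ^ 2)) := by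
    have e : (x - t) ^ 2 + y ^ 2 < s ^ 2 ↔ (x - t) ^ 2 < s ^ 2 - y ^ 2 := by
      constructor <;> intro <;> linarith
    rw [e, Real.sq_lt, mem_Ioo]
    constructor <;> rintro ⟨h1, h2⟩ <;> constructor <;> linarith
  simp only [indicator, lensSet, mem_ofPred_eq, this, phiInd]
  split_ifs <;> simp_all

lemma lens_integrable {ρ s t : ℝ} (hs : 0 < s) :
    Integrable ((lensSet ρ s t).indicator (1 : ℝ × ℝ → ℝ)) (volume.prod volume) := by
  refine (integrable_indicator_iff (lens_meas ρ s t)).2 ?_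
  exact integrableOn_const (lens_lt_top hs).ne

lemma slice_integrable {ρ s t : ℝ} (hs : 0 < s) : Integrable (sliceI ρ s t) := by
  have := (lens_integrable (ρ := ρ) (t := t) hs).integral_prod_right
  simpa only [slice_eq] using this

lemma lens_area {ρ s t : ℝ} (hs : 0 < s) :
    volume.real (lensSet ρ s t) = ∫ y in (-s)..s, sliceI ρ s t y := by
  rw [← integral_indicator_one (lens_meas ρ s t)]
  have := integral_prod_symm _ (lens_integrable (ρ := ρ) (t := t) hs)
  rw [Measure.volume_eq_prod, this]
  simp only [slice_eq]
  rw [intervalIntegral.integral_of_le (by linarith)]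
  symm
  apply setIntegral_eq_integral_of_forall_compl_eq_zero
  intro y hy
  have : s ^ 2 - y ^ 2 ≤ 0 := by
    rw [mem_Ioc, not_and_or, not_lt, not_le] at hy
    rcases hy with h | h <;> nlinarith
  unfold sliceI
  rw [Real.sqrt_eq_zero_of_nonpos this]
  simp

lemma lens_diff {ρ s t₁ t₂ : ℝ} (hs : 0 < s) (h1 : 0 ≤ t₁) (h12 : t₁ ≤ t₂) :
    volume.real (lensSet ρ s t₂) - volume.real (lensSet ρ s t₁) =
      ∫ τ in t₁..t₂, -(2 * √(chordE ρ s τ)) := by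
  rw [lens_area hs, lens_area hs, ← intervalIntegral.integral_sub
    (slice_integrable hs).intervalIntegrable (slice_integrable hs).intervalIntegrable]
  simp only [slice_diff]
  rw [intervalIntegral_intervalIntegral_swap]
  · apply intervalIntegral.integral_congr_ae
    refine ae_of_all _ fun τ hτ => ?_
    rw [uIoc_of_le h12] at hτ
    exact inner_int hs (h1.trans_lt hτ.1)
  · refine Measure.integrableOn_of_bounded (M := 2) ?_ ?_ (ae_of_all _ fun z => ?_)
    · exact ((measure_mono (prod_mono uIoc_subset_uIcc uIoc_subset_uIcc)).trans_lt
        (isCompact_uIcc.prod isCompact_uIcc).measure_lt_top).ne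
    · apply Measurable.aestronglyMeasurable
      exact ((phi_meas ρ).comp (by fun_prop : Measurable fun z : ℝ × ℝ =>
        (z.2 + √(s ^ 2 - z.1 ^ 2), z.1))).sub ((phi_meas ρ).comp
        (by fun_prop : Measurable fun z : ℝ × ℝ => (z.2 - √(s ^ 2 - z.1 ^ 2), z.1)))
    · refine (norm_sub_le _ _).trans ?_
      linarith [phi_bound ρ (z.2 + √(s ^ 2 - z.1 ^ 2)) z.1,
        phi_bound ρ (z.2 - √(s ^ 2 - z.1 ^ 2)) z.1]

lemma chord_bound {s : ℝ} (hs : 0 < s) (ρ τ : ℝ) : √(chordE ρ s τ) ≤ s := by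
  rw [Real.sqrt_le_left hs.le]
  unfold chordE
  nlinarith [sq_nonneg ((τ ^ 2 + s ^ 2 - ρ ^ 2) / (2 * τ))]

lemma chord_ii {s : ℝ} (hs : 0 < s) (ρ t₁ t₂ : ℝ) :
    IntervalIntegrable (fun τ => √(chordE ρ s τ)) volume t₁ t₂ := by
  rw [intervalIntegrable_iff]
  refine Measure.integrableOn_of_bounded (M := s) (by simp) ?_ (ae_of_all _ fun x => ?_)
  · apply Measurable.aestronglyMeasurable
    unfold chordE
    fun_prop
  · rw [Real.norm_of_nonneg (Real.sqrt_nonneg _)]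
    exact chord_bound hs _ _

/-- the mass function -/
def gFun (R Q s b c t : ℝ) : ℝ :=
  b * volume.real (lensSet Q s t) - c * volume.real (lensSet R s t)

lemma g_diff {R Q s b c t₁ t₂ : ℝ} (hs : 0 < s) (h1 : 0 ≤ t₁) (h12 : t₁ ≤ t₂) :
    gFun R Q s b c t₂ - gFun R Q s b c t₁ =
      ∫ τ in t₁..t₂, 2 * (c * √(chordE R s τ) - b * √(chordE Q s τ)) := by
  have e1 := lens_diff (ρ := R) hs h1 h12
  have e2 := lens_diff (ρ := Q) hs h1 h12
  rw [intervalIntegral.integral_neg, intervalIntegral.integral_const_mul] at e1 e2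
  rw [intervalIntegral.integral_const_mul, intervalIntegral.integral_sub
    ((chord_ii hs _ _ _).const_mul _) ((chord_ii hs _ _ _).const_mul _),
    intervalIntegral.integral_const_mul, intervalIntegral.integral_const_mul]
  unfold gFun
  linear_combination b * e2 - c * e1

lemma g_lip {R Q s b c : ℝ} (hs : 0 < s) (hc : 0 < c) (hcb : c < b) {t₁ t₂ : ℝ} (h1 : 0 ≤ t₁)
    (h12 : t₁ ≤ t₂) : |gFun R Q s b c t₂ - gFun R Q s b c t₁| ≤ (2 * b * s) * |t₂ - t₁| := by
  rw [g_diff hs h1 h12]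
  rw [← Real.norm_eq_abs]
  apply intervalIntegral.norm_integral_le_of_norm_le_const
  intro τ _
  have a1 := chord_bound hs R τ
  have a2 := chord_bound hs Q τ
  have a3 := Real.sqrt_nonneg (chordE R s τ)
  have a4 := Real.sqrt_nonneg (chordE Q s τ)
  rw [Real.norm_eq_abs, abs_le]
  have b1 := mul_le_mul_of_nonneg_left a1 hc.le
  have b2 := mul_le_mul_of_nonneg_left a2 (hc.trans hcb).le
  have b3 := mul_nonneg hc.le a3
  have b4 := mul_nonneg (hc.trans hcb).le a4
  have b5 := mul_le_mul_of_nonneg_right hcb.le hs.le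
  constructor <;> linarith

lemma g_cont {R Q s b c : ℝ} (hs : 0 < s) (hc : 0 < c) (hcb : c < b) :
    ContinuousOn (gFun R Q s b c) (Icc 0 Q) := by
  have hb : 0 < b := hc.trans hcb
  have : LipschitzOnWith (Real.toNNReal (2 * b * s)) (gFun R Q s b c) (Icc 0 Q) := by
    apply LipschitzOnWith.of_dist_le_mul
    intro x hx y hy
    rw [Real.coe_toNNReal _ (by positivity), Real.dist_eq, Real.dist_eq]
    rcases le_total x y with h | h
    · rw [abs_sub_comm, abs_sub_comm x]
      exact g_lip hs hc hcb hx.1 h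
    · exact g_lip hs hc hcb hy.1 h
  exact this.continuousOn

lemma g_quasi {R Q s b c k t₁ t t₂ : ℝ} (hR : 0 < R) (hRQ : R < Q) (hs : 0 < s) (hc : 0 < c)
    (hcb : c < b) (h0 : 0 ≤ t₁) (h1 : t₁ ≤ t) (h2 : t ≤ t₂) (h3 : t₂ ≤ Q)
    (k1 : k ≤ gFun R Q s b c t₁) (k2 : k ≤ gFun R Q s b c t₂) : k ≤ gFun R Q s b c t := by
  by_contra! hcon
  have d1 := g_diff (R := R) (Q := Q) (b := b) (c := c) hs h0 h1
  have d2 := g_diff (R := R) (Q := Q) (b := b) (c := c) hs (h0.trans h1) h2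
  have : ∃ τ ∈ Ioc t₁ t, c * √(chordE R s τ) < b * √(chordE Q s τ) := by
    by_contra! hh
    have : 0 ≤ ∫ τ in t₁..t, 2 * (c * √(chordE R s τ) - b * √(chordE Q s τ)) := by
      rw [intervalIntegral.integral_of_le h1]
      refine setIntegral_nonneg measurableSet_Ioc fun τ hτ => ?_
      linarith [hh τ hτ]
    linarith
  obtain ⟨τ₁, hτ₁, hn⟩ := this
  have : ∫ τ in t..t₂, 2 * (c * √(chordE R s τ) - b * √(chordE Q s τ)) ≤ 0 := by
    rw [intervalIntegral.integral_of_le h2]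
    refine setIntegral_nonpos measurableSet_Ioc fun τ hτ => ?_
    linarith [chord_sign hR hRQ hs hc hcb (h0.trans_lt hτ₁.1) (hτ₁.2.trans_lt hτ.1)
      (hτ.2.trans h3) hn]
  linarith


lemma ball_lens {ρ s t : ℝ} (hρ : 0 < ρ) (hs : 0 < s) :
    (volume : Measure (EuclideanSpace ℝ (Fin 2))).real (ball (!₂[t, 0] : EuclideanSpace ℝ (Fin 2)) s ∩ ball 0 ρ) =
      volume.real (lensSet ρ s t) := by
  have mp := (volume_preserving_finTwoArrow ℝ).comp
    (EuclideanSpace.volume_preserving_symm_measurableEquiv_toLp (Fin 2))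
  rw [← mp.measureReal_preimage (lens_meas ρ s t).nullMeasurableSet]
  congr 1
  ext z
  simp only [mem_inter_iff, mem_ball, dist_eq_norm, sub_zero, EuclideanSpace.norm_eq, lensSet,
    mem_preimage, mem_ofPred_eq, Real.sqrt_lt' hρ, Real.sqrt_lt' hs]
  simp [Fin.sum_univ_two, MeasurableEquiv.finTwoArrow]

lemma ball_rot {ρ s : ℝ} (hρ : 0 < ρ) (hs : 0 < s) (p : EuclideanSpace ℝ (Fin 2)) :
    (volume : Measure (EuclideanSpace ℝ (Fin 2))).real (ball p s ∩ ball 0 ρ) =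
      volume.real (lensSet ρ s ‖p‖) := by
  rw [← ball_lens hρ hs]
  have hn : ‖(!₂[‖p‖, 0] : EuclideanSpace ℝ (Fin 2))‖ = ‖p‖ := by
    simp [EuclideanSpace.norm_eq, Fin.sum_univ_two]
  have hr := Submodule.reflection_sub hn
  set e := (ℝ ∙ ((!₂[‖p‖, 0] : EuclideanSpace ℝ (Fin 2)) - p))ᗮ.reflection
  rw [← e.measurePreserving.measureReal_preimage
    (measurableSet_ball.inter measurableSet_ball).nullMeasurableSet, preimage_inter]
  congr 2
  · have := e.isometry.preimage_ball (!₂[‖p‖, 0] : EuclideanSpace ℝ (Fin 2)) s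
    rwa [hr] at this
  · have := e.isometry.preimage_ball (0 : EuclideanSpace ℝ (Fin 2)) ρ
    rwa [map_zero] at this

lemma mu_ball {R Q a b s : ℝ} (hR : 0 < R) (hRQ : R < Q) (ha : 0 < a) (hab : a < b) (hs : 0 < s)
    (p : EuclideanSpace ℝ (Fin 2)) :
    ((volume.withDensity (fun p : EuclideanSpace ℝ (Fin 2) =>
      if ‖p‖ < R then ENNReal.ofReal a else if ‖p‖ ≤ Q then ENNReal.ofReal b else 0))
        (ball p s)).toReal = gFun R Q s b (b - a) ‖p‖ := by
  have hf : (fun p : EuclideanSpace ℝ (Fin 2) =>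
      if ‖p‖ < R then ENNReal.ofReal a else if ‖p‖ ≤ Q then ENNReal.ofReal b else 0) =
      fun p => (ball (0 : EuclideanSpace ℝ (Fin 2)) R).indicator (fun _ => ENNReal.ofReal a) p +
        (closedBall (0 : EuclideanSpace ℝ (Fin 2)) Q \ ball 0 R).indicator (fun _ => ENNReal.ofReal b) p := by
    ext z
    simp only [indicator, mem_ball, mem_sdiff, mem_closedBall, dist_zero_right]
    split_ifs <;> simp_all
  have hmd : MeasurableSet (closedBall (0 : EuclideanSpace ℝ (Fin 2)) Q \ ball 0 R) :=
    measurableSet_closedBall.diff measurableSet_ball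
  have hae : (closedBall (0 : EuclideanSpace ℝ (Fin 2)) Q ∩ ball p s : Set (EuclideanSpace ℝ (Fin 2))) =ᵐ[volume]
      (ball p s ∩ ball (0 : EuclideanSpace ℝ (Fin 2)) Q : Set (EuclideanSpace ℝ (Fin 2))) := by
    have hz : ∀ᵐ z : EuclideanSpace ℝ (Fin 2), z ∉ sphere (0 : EuclideanSpace ℝ (Fin 2)) Q :=
      measure_eq_zero_iff_ae_notMem.1 (Measure.addHaar_sphere _ _ _)
    filter_upwards [hz] with z hz
    apply propext
    change (z ∈ closedBall (0 : EuclideanSpace ℝ (Fin 2)) Q ∧ z ∈ ball p s) ↔ (z ∈ ball p s ∧ z ∈ ball (0 : EuclideanSpace ℝ (Fin 2)) Q)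
    simp only [mem_sphere, mem_closedBall, mem_ball] at *
    constructor
    · rintro ⟨h1, h2⟩
      exact ⟨h2, lt_of_le_of_ne h1 hz⟩
    · rintro ⟨h1, h2⟩
      exact ⟨h2.le, h1⟩
  have hfin : ∀ S : Set (EuclideanSpace ℝ (Fin 2)), volume (S ∩ ball p s) ≠ ⊤ := fun S =>
    ((measure_mono inter_subset_right).trans_lt measure_ball_lt_top).ne
  rw [withDensity_apply _ measurableSet_ball, hf,
    lintegral_add_left (measurable_const.indicator measurableSet_ball),
    lintegral_indicator_const measurableSet_ball, lintegral_indicator_const hmd,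
    Measure.restrict_apply measurableSet_ball, Measure.restrict_apply hmd,
    ENNReal.toReal_add (ENNReal.mul_ne_top ENNReal.ofReal_ne_top (hfin _))
      (ENNReal.mul_ne_top ENNReal.ofReal_ne_top (hfin _)), ENNReal.toReal_mul, ENNReal.toReal_mul,
    ENNReal.toReal_ofReal ha.le, ENNReal.toReal_ofReal (ha.trans hab).le]
  have hset : (closedBall (0 : EuclideanSpace ℝ (Fin 2)) Q \ ball 0 R) ∩ ball p s =
      (closedBall (0 : EuclideanSpace ℝ (Fin 2)) Q ∩ ball p s) \ (ball p s ∩ ball 0 R) := by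
    ext z; simp only [mem_inter_iff, mem_sdiff]; tauto
  have h1 : (volume ((closedBall (0 : EuclideanSpace ℝ (Fin 2)) Q \ ball 0 R) ∩ ball p s)).toReal =
      volume.real (lensSet Q s ‖p‖) - volume.real (lensSet R s ‖p‖) := by
    change volume.real _ = _
    rw [hset, measureReal_sdiff _ (measurableSet_ball.inter measurableSet_ball) (hfin _),
      measureReal_congr hae, ball_rot (hR.trans hRQ) hs, ball_rot hR hs]
    rintro z ⟨h1, h2⟩
    exact ⟨closedBall_subset_closedBall hRQ.le (ball_subset_closedBall h2), h1⟩
  have h2 : (volume (ball (0 : EuclideanSpace ℝ (Fin 2)) R ∩ ball p s)).toReal = volume.real (lensSet R s ‖p‖) := by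
    rw [inter_comm]; exact ball_rot hR hs p
  rw [h1, h2]
  unfold gFun
  ring

end

/-- For the weighted annulus measure `μ = W(R,Q,w)` with `a < b`, every
superlevel set `{p | ‖p‖ ≤ Q ∧ μ(B(p,s)) ≥ k}` of the uniform filtration (for `s > 0` and
`0 < k ≤ 1`) is of the form `{p | ‖p‖ ∈ I}` for some closed interval `I ⊆ [0,Q]` (possibly
empty); i.e. it is empty or a (possibly degenerate) closed annulus centred at the origin. -/
theorem uniform_filtration_stage_is_annulus
    (R Q w a b : ℝ) (hR : 0 < R) (hRQ : R < Q) (hw0 : 0 < w) (hw1 : w < 1)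
    (ha : a = w / (Real.pi * R ^ 2))
    (hb : b = (1 - w) / (Real.pi * (Q ^ 2 - R ^ 2)))
    (hab : a < b)
    (μ : Measure (EuclideanSpace ℝ (Fin 2)))
    (hμ : μ = volume.withDensity (fun p =>
      if ‖p‖ < R then ENNReal.ofReal a else if ‖p‖ ≤ Q then ENNReal.ofReal b else 0)) :
    ∀ s : ℝ, 0 < s → ∀ k : ℝ, 0 < k → k ≤ 1 →
      ∃ lo hi : ℝ, Icc lo hi ⊆ Icc 0 Q ∧
        {p : EuclideanSpace ℝ (Fin 2) | ‖p‖ ≤ Q ∧ k ≤ (μ (ball p s)).toReal} =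
          {p : EuclideanSpace ℝ (Fin 2) | ‖p‖ ∈ Icc lo hi} := by
  intro s hs k _ _
  have ha0 : 0 < a := by rw [ha]; positivity
  have hc : 0 < b - a := by linarith
  have hcb : b - a < b := by linarith
  subst hμ
  simp only [mu_ball hR hRQ ha0 hab hs]
  set T : Set ℝ := {t | t ∈ Icc 0 Q ∧ k ≤ gFun R Q s b (b - a) t} with hT
  have hTQ : T ⊆ Icc 0 Q := fun t h => h.1
  have hclosed : IsClosed T := by
    have := (g_cont (R := R) (Q := Q) hs hc hcb).preimage_isClosed_of_isClosed isClosed_Icc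
      (isClosed_Ici (a := k))
    exact this
  have hcomp : IsCompact T := isCompact_Icc.of_isClosed_subset hclosed hTQ
  have hset : {p : EuclideanSpace ℝ (Fin 2) | ‖p‖ ≤ Q ∧ k ≤ gFun R Q s b (b - a) ‖p‖} =
      {p | ‖p‖ ∈ T} := by
    ext p
    simp [hT]
  rw [hset]
  rcases T.eq_empty_or_nonempty with he | hne
  · exact ⟨1, 0, by simp, by simp [he]⟩
  · have hTI : T = Icc (sInf T) (sSup T) := by
      apply Subset.antisymm
      · exact fun t ht => ⟨csInf_le hcomp.bddBelow ht, le_csSup hcomp.bddAbove ht⟩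
      · intro t ht
        have m1 := hcomp.sInf_mem hne
        have m2 := hcomp.sSup_mem hne
        exact ⟨⟨m1.1.1.trans ht.1, ht.2.trans m2.1.2⟩,
          g_quasi hR hRQ hs hc hcb m1.1.1 ht.1 ht.2 m2.1.2 m1.2 m2.2⟩
    refine ⟨sInf T, sSup T, ?_, ?_⟩
    · rw [← hTI]; exact hTQ
    · rw [← hTI]
end
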